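/- Consider the merge sort CHR^rp program with rules: 1 :: ms1 @ arrow(X,A) \ arrow(X,B) ⇔ A < B | arrow(A,B); 2 :: ms2 @ merge(N,A), merge(N,B) ⇔ A < B | merge(2·N+1,A), arrow(A,B); 3 :: ms3 @ number(X) ⇔ merge(0,X), executed under ω_p from an initial goal of n distinct number/1 constraints (n a power of 2). Then in any derivation, rule ms3 fires exactly n times, rule ms2 fires exactly n−1 times, the sum over all fired ms2 instances producing merge(2·N+1,_) of the values N is O(n log n), and consequently the total numbers of strong prefix firings are O(n log n) for rule ms1, O(n) for rule ms2, and O(n) for rule ms3. -/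

import Mathlib

namespace MergeSort

/-- The CHR constraints of the merge sort program: `number X`, `merge N A` and
`arrow A B`. -/
inductive MSC : Type
  | number (x : ℤ)
  | merge (n : ℕ) (a : ℤ)
  | arrow (a b : ℤ)
deriving DecidableEq

/-- Some instance of rule `ms1` (priority 1) is applicable in the store `S`. -/
def ms1App (S : Multiset MSC) : Prop :=
  ∃ X A B : ℤ, A < B ∧ MSC.arrow X A ∈ S ∧ MSC.arrow X B ∈ S

/-- Some instance of rule `ms2` (priority 2) is applicable in the store `S`. -/
def ms2App (S : Multiset MSC) : Prop :=
  ∃ (N : ℕ) (A B : ℤ), A < B ∧ MSC.merge N A ∈ S ∧ MSC.merge N B ∈ S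

/-- Transition labels recording which rule fired (for `ms2` also the value `N` of the
matched `merge` constraints). -/
inductive Lab : Type
  | ms1
  | ms2 (N : ℕ)
  | ms3
deriving DecidableEq

/-- The transitions of the priority semantics ω_p of the merge sort program
`1 :: ms1 @ arrow(X,A) \ arrow(X,B) ⇔ A < B | arrow(A,B)`,
`2 :: ms2 @ merge(N,A), merge(N,B) ⇔ A < B | merge(2·N+1,A), arrow(A,B)`,
`3 :: ms3 @ number(X) ⇔ merge(0,X)`:
among all applicable rule instances, one of highest priority (numerically smallest)
fires, removing the constraints matching removed heads and adding the instantiated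
body.  (The guards `A < B` make the matched head constraints distinct; since no rule is
a propagation rule, no propagation history is needed and states are just multisets of
stored constraints.) -/
inductive Step : Multiset MSC → Lab → Multiset MSC → Prop
  | ms1 (S : Multiset MSC) (X A B : ℤ) :
      A < B → MSC.arrow X A ∈ S → MSC.arrow X B ∈ S →
      Step S Lab.ms1 (MSC.arrow A B ::ₘ S.erase (MSC.arrow X B))
  | ms2 (S : Multiset MSC) (N : ℕ) (A B : ℤ) :
      A < B → MSC.merge N A ∈ S → MSC.merge N B ∈ S →
      ¬ ms1App S →
      Step S (Lab.ms2 N)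
        (MSC.merge (2 * N + 1) A ::ₘ MSC.arrow A B ::ₘ
          ((S.erase (MSC.merge N A)).erase (MSC.merge N B)))
  | ms3 (S : Multiset MSC) (X : ℤ) :
      MSC.number X ∈ S → ¬ ms1App S → ¬ ms2App S →
      Step S Lab.ms3 (MSC.merge 0 X ::ₘ S.erase (MSC.number X))

/-- The initial store: one `number` constraint for each element of `l`. -/
def InitState (l : List ℤ) : Multiset MSC := ↑(l.map MSC.number)

/-- Reachability from the initial store of `l`. -/
def Reach (l : List ℤ) (S : Multiset MSC) : Prop :=
  Relation.ReflTransGen (fun s s' => ∃ lab, Step s lab s') (InitState l) S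

/-- `merge` constraints with first argument `N`. -/
def mergeFst (N : ℕ) : MSC → Bool
  | .merge m _ => m = N
  | _ => false

/-- `arrow` constraints with first argument `V`. -/
def arrowFst (V : ℤ) : MSC → Bool
  | .arrow a _ => a = V
  | _ => false

end MergeSort

namespace MergeSort

/-- Is the label a firing of rule `ms2`? -/
def isMs2 : Lab → Bool
  | .ms2 _ => true
  | _ => false

/-- The value `N` of the `merge(N,_)` constraints matched by an `ms2` firing. -/
def ms2Val : Lab → ℕ
  | .ms2 N => N
  | _ => 0

end MergeSort

/-!
The constraints `number X` and `merge N A` head disjoint blocks of `1` and of `N + 1` values that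
partition the input, so the sizes of all blocks add up to `n`. A firing of `ms2` merges two blocks
of equal size `m = N + 1`; hence all sizes are powers of two, and the sum of `m log₂ m` over all
blocks rises by `2 m`. This sum never exceeds `n log₂ n`, which bounds the total size of the blocks
created by merging. In a final store no two blocks have equal size, so their sizes are the powers
of two in the binary expansion of `n`, and the number of merges is `n` minus the number of its
binary digits `1`.

At any time at most one instance of `ms1` and at most one of `ms2` is applicable, because a firing
uses up the instance of its rule and inserts at most one `arrow` and one `merge`. Hence every match
of both heads is fired, whereas the matches of the first head are counted by the firings that insert
the matched constraint. While `ms1` works off the instance created by a merge, the common source of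
its two arrows climbs strictly upwards inside the merged block, which takes at most `2 (N + 1)`
firings.
-/

open Finset

namespace MergeSort

section Counting

theorem add_sum_range_eq_of_succ {M : Type*} [AddCommMonoid M] {F a : ℕ → M} {L : ℕ}
    (h : ∀ i < L, F (i + 1) + a i = F i) : F L + ∑ i ∈ range L, a i = F 0 := by
  induction L with
  | zero => simp
  | succ L ih =>
    rw [sum_range_succ_comm, ← add_assoc, h L L.lt_succ_self,
      ih fun i hi ↦ h i (hi.trans L.lt_succ_self)]

theorem card_eq_length_bitIndices {ι : Type*} {s : Finset ι} {a : ι → ℕ}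
    (hpow : ∀ i ∈ s, ∃ j, a i = 2 ^ j) (hinj : Set.InjOn a s) :
    #s = (∑ i ∈ s, a i).bitIndices.length := by
  have hlog : ∀ i ∈ s, 2 ^ Nat.log 2 (a i) = a i := fun i hi ↦ by
    obtain ⟨j, hj⟩ := hpow i hi
    rw [hj, Nat.log_pow one_lt_two]
  have hlog_inj : Set.InjOn (fun i ↦ Nat.log 2 (a i)) s := fun i hi j hj hij ↦
    hinj hi hj (by rw [← hlog i hi, ← hlog j hj]; exact congrArg (2 ^ ·) hij)
  have hsum : ∑ i ∈ s, a i = ∑ j ∈ s.image (fun i ↦ Nat.log 2 (a i)), 2 ^ j := by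
    rw [sum_image hlog_inj]
    exact sum_congr rfl fun i hi ↦ (hlog i hi).symm
  rw [hsum, ← List.toFinset_card_of_nodup Nat.bitIndices_nodup, toFinset_bitIndices_sum_two_pow,
    card_image_of_injOn hlog_inj]

theorem ncard_le_card_filter_of_cover {α : Type*} {s : Set α} {L : ℕ} {T : ℕ → Set α} {p : ℕ → Prop}
    [DecidablePred p] (hs : ∀ q ∈ s, ∃ i < L, q ∈ T i) (hsub : ∀ i < L, (T i).Subsingleton)
    (hp : ∀ i < L, (T i).Nonempty → p i) : s.ncard ≤ #{i ∈ range L | p i} := by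
  have hcover : s ⊆ ⋃ i ∈ ({i ∈ range L | p i} : Finset ℕ), T i := by
    intro q hqs
    obtain ⟨i, hi, hq⟩ := hs q hqs
    exact Set.mem_biUnion (by simpa using ⟨hi, hp i hi ⟨q, hq⟩⟩) hq
  refine (Set.encard_le_coe_iff_finite_ncard_le.1 ?_).2
  calc s.encard
      ≤ ∑ i ∈ range L with p i, (T i).encard :=
        (Set.encard_le_encard hcover).trans (set_encard_biUnion_le _ _)
    _ ≤ ∑ i ∈ range L with p i, 1 := sum_le_sum fun i hi ↦
        Set.encard_le_one_iff_subsingleton.2 (hsub i (mem_range.1 (mem_filter.1 hi).1))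
    _ = (#{i ∈ range L | p i} : ℕ) := by simp

theorem exists_lt_mem_sdiff_of_mem {α : Type*} {A : ℕ → Set α} (h0 : A 0 = ∅) {q : α} {i : ℕ}
    (hq : q ∈ A i) : ∃ j < i, q ∈ A (j + 1) \ A j := by
  induction i with
  | zero => simp [h0] at hq
  | succ i ih =>
    by_cases hi : q ∈ A i
    · obtain ⟨j, hj, hjq⟩ := ih hi
      exact ⟨j, hj.trans i.lt_succ_self, hjq⟩
    · exact ⟨i, i.lt_succ_self, hq, hi⟩

theorem ncard_le_card_filter_of_sdiff {α : Type*} {s : Set α} {L : ℕ} {A : ℕ → Set α}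
    {p : ℕ → Prop} [DecidablePred p] (hs : ∀ q ∈ s, ∃ i < L, q ∈ A i) (h0 : A 0 = ∅)
    (hsub : ∀ i < L, (A (i + 1) \ A i).Subsingleton)
    (hp : ∀ i < L, (A (i + 1) \ A i).Nonempty → p i) : s.ncard ≤ #{i ∈ range L | p i} := by
  refine ncard_le_card_filter_of_cover (fun q hqs ↦ ?_) hsub hp
  obtain ⟨i, hi, hq⟩ := hs q hqs
  obtain ⟨j, hj, hjq⟩ := exists_lt_mem_sdiff_of_mem h0 hq
  exact ⟨j, hj.trans hi, hjq⟩

theorem subsingleton_insert_sdiff {α : Type*} {A B : Set α} (hAB : A ⊆ B) (p : α) :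
    (insert p A \ B).Subsingleton :=
  Set.subsingleton_singleton.anti (t := {p}) (by grind)

theorem card_filter_ite_eq_le {α : Type*} [DecidableEq α] (s : Finset α) (ρ : α → α) {a b : α} :
    #{v ∈ s | (if ρ v = b then a else ρ v) = a} ≤ #{v ∈ s | ρ v = a} + #{v ∈ s | ρ v = b} := by
  refine (card_le_card fun v ↦ ?_).trans (card_union_le _ _)
  simp only [mem_filter, mem_union]
  grind

end Counting

section Conflicts

variable {α β : Type*} [LinearOrder β] {R R' : Set (α × β)} {x : α} {a b : β}

/-- The pairs of edges of `R` out of a common source, each pair ordered by its targets: the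
instances of the two-headed rules `ms1` and `ms2`, for `R` the stored `arrow`s or `merge`s. -/
def conflicts (R : Set (α × β)) : Set (α × β × β) :=
  {q | q.2.1 < q.2.2 ∧ (q.1, q.2.1) ∈ R ∧ (q.1, q.2.2) ∈ R}

theorem conflicts_eq_empty_iff :
    conflicts R = ∅ ↔ ∀ x a b, (x, a) ∈ R → (x, b) ∈ R → a = b := by
  refine ⟨fun h x a b ha hb ↦ ?_, fun h ↦ ?_⟩
  · by_contra hab
    rcases lt_or_gt_of_ne hab with hab | hab
    · exact Set.eq_empty_iff_forall_notMem.1 h (x, a, b) ⟨hab, ha, hb⟩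
    · exact Set.eq_empty_iff_forall_notMem.1 h (x, b, a) ⟨hab, hb, ha⟩
  · exact Set.eq_empty_of_forall_notMem fun q ⟨hlt, ha, hb⟩ ↦ hlt.ne (h _ _ _ ha hb)

theorem conflicts_eq_empty_of_subset (hRR' : R ⊆ R') (h : conflicts R' = ∅) :
    conflicts R = ∅ :=
  Set.eq_empty_of_forall_notMem fun q ⟨hlt, ha, hb⟩ ↦
    Set.eq_empty_iff_forall_notMem.1 h q ⟨hlt, hRR' ha, hRR' hb⟩

theorem subsingleton_conflicts_insert (h : conflicts R = ∅) (p : α × β) :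
    (conflicts (insert p R)).Subsingleton := by
  rw [conflicts_eq_empty_iff] at h
  rintro ⟨x, a, b⟩ ⟨hab, ha, hb⟩ ⟨y, c, d⟩ ⟨hcd, hc, hd⟩
  grind

theorem fst_eq_of_mem_conflicts_insert (h : conflicts R = ∅) {q : α × β × β}
    (hq : q ∈ conflicts (insert (x, a) R)) : q.1 = x := by
  by_contra hne
  obtain ⟨hlt, ha, hb⟩ := hq
  exact hlt.ne (conflicts_eq_empty_iff.1 h _ _ _ (ha.resolve_left fun e ↦ hne (Prod.mk.inj e).1)
    (hb.resolve_left fun e ↦ hne (Prod.mk.inj e).1))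

theorem conflicts_eq_empty_of_insert (h : (conflicts (insert (x, b) R)).Subsingleton)
    (hb : (x, b) ∉ R) (ha : (x, a) ∈ R) (hab : a < b) : conflicts R = ∅ := by
  refine Set.eq_empty_of_forall_notMem fun q ⟨hlt, hq₁, hq₂⟩ ↦ hb ?_
  obtain rfl : q = (x, a, b) := h ⟨hlt, .inr hq₁, .inr hq₂⟩ ⟨hab, .inr ha, .inl rfl⟩
  exact hq₂

end Conflicts

section Stores

/-- The value that a constraint keeps present in the store. -/
def target : MSC → ℤ
  | .number x => x
  | .merge _ a => a
  | .arrow _ b => b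

/-- The number of input values in the block headed by a constraint: `merge N A` stands for a
block of `N + 1` values with least element `A`, `number X` for the block `{X}`, and an `arrow`
heads no block, which is recorded as size `0`. -/
def size : MSC → ℕ
  | .number _ => 1
  | .merge N _ => N + 1
  | .arrow _ _ => 0

/-- The contribution `m log₂ m` of a block of size `m` to the potential that bounds the cost of
all merges. -/
def blockPotential (c : MSC) : ℕ := size c * Nat.log 2 (size c)

/-- Recognizes the `number` constraints. -/
def isNumber : MSC → Bool
  | .number _ => true
  | _ => false

/-- The stored `arrow` constraints, as a relation. -/
def arrows (S : Multiset MSC) : Set (ℤ × ℤ) := {q | MSC.arrow q.1 q.2 ∈ S}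

/-- The stored `merge` constraints, as a relation. -/
def merges (S : Multiset MSC) : Set (ℕ × ℤ) := {q | MSC.merge q.1 q.2 ∈ S}

/-- The set of values occurring in a store. -/
def values (S : Multiset MSC) : Finset ℤ := (S.map target).toFinset

variable {S : Multiset MSC}

@[simp] theorem arrows_cons_number (x : ℤ) : arrows (.number x ::ₘ S) = arrows S := by
  simp [arrows]

@[simp] theorem arrows_cons_merge (N : ℕ) (a : ℤ) : arrows (.merge N a ::ₘ S) = arrows S := by
  simp [arrows]

@[simp] theorem arrows_cons_arrow (a b : ℤ) :
    arrows (.arrow a b ::ₘ S) = insert (a, b) (arrows S) := by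
  ext q; simp [arrows, Prod.ext_iff]

@[simp] theorem merges_cons_number (x : ℤ) : merges (.number x ::ₘ S) = merges S := by
  simp [merges]

@[simp] theorem merges_cons_merge (N : ℕ) (a : ℤ) :
    merges (.merge N a ::ₘ S) = insert (N, a) (merges S) := by
  ext q; simp [merges, Prod.ext_iff]

@[simp] theorem merges_cons_arrow (a b : ℤ) : merges (.arrow a b ::ₘ S) = merges S := by
  simp [merges]

theorem ms1App_iff_conflicts_nonempty : ms1App S ↔ (conflicts (arrows S)).Nonempty :=
  ⟨fun ⟨X, A, B, h⟩ ↦ ⟨(X, A, B), h⟩, fun ⟨(X, A, B), h⟩ ↦ ⟨X, A, B, h⟩⟩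

theorem ms2App_iff_conflicts_nonempty : ms2App S ↔ (conflicts (merges S)).Nonempty :=
  ⟨fun ⟨N, A, B, h⟩ ↦ ⟨(N, A, B), h⟩, fun ⟨(N, A, B), h⟩ ↦ ⟨N, A, B, h⟩⟩

theorem not_ms1App_iff_conflicts_eq_empty : ¬ ms1App S ↔ conflicts (arrows S) = ∅ := by
  rw [ms1App_iff_conflicts_nonempty, Set.not_nonempty_iff_eq_empty]

theorem not_ms2App_iff_conflicts_eq_empty : ¬ ms2App S ↔ conflicts (merges S) = ∅ := by
  rw [ms2App_iff_conflicts_nonempty, Set.not_nonempty_iff_eq_empty]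

end Stores

section Steps

variable {S S' : Multiset MSC} {lab : Lab}

/-- The relation `Step` with each store displayed as the constraints that a firing replaces,
followed by the rest `T` that it leaves alone, so that no `Multiset.erase` occurs. -/
inductive Firing : Multiset MSC → Lab → Multiset MSC → Prop
  | ms1 (T : Multiset MSC) (X A B : ℤ) :
      A < B → MSC.arrow X A ∈ T →
      Firing (.arrow X B ::ₘ T) .ms1 (.arrow A B ::ₘ T)
  | ms2 (T : Multiset MSC) (N : ℕ) (A B : ℤ) :
      A < B → conflicts (arrows T) = ∅ →
      Firing (.merge N A ::ₘ .merge N B ::ₘ T) (.ms2 N)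
        (.merge (2 * N + 1) A ::ₘ .arrow A B ::ₘ T)
  | ms3 (T : Multiset MSC) (X : ℤ) :
      conflicts (arrows T) = ∅ → conflicts (merges T) = ∅ →
      Firing (.number X ::ₘ T) .ms3 (.merge 0 X ::ₘ T)

theorem Step.firing (h : Step S lab S') : Firing S lab S' := by
  cases h with
  | ms1 X A B hAB hA hB =>
    obtain ⟨T, rfl⟩ := Multiset.exists_cons_of_mem hB
    rw [Multiset.erase_cons_head]
    exact .ms1 T X A B hAB (by simpa [hAB.ne] using hA)
  | ms2 N A B hAB hA hB h1 =>
    obtain ⟨T, rfl⟩ := Multiset.exists_cons_of_mem hA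
    have hBT : MSC.merge N B ∈ T := by simpa [hAB.ne'] using hB
    obtain ⟨T, rfl⟩ := Multiset.exists_cons_of_mem hBT
    rw [Multiset.erase_cons_head, Multiset.erase_cons_head]
    exact .ms2 T N A B hAB (by simpa [not_ms1App_iff_conflicts_eq_empty] using h1)
  | ms3 X hX h1 h2 =>
    obtain ⟨T, rfl⟩ := Multiset.exists_cons_of_mem hX
    rw [Multiset.erase_cons_head]
    exact .ms3 T X (by simpa [not_ms1App_iff_conflicts_eq_empty] using h1)
      (by simpa [not_ms2App_iff_conflicts_eq_empty] using h2)

theorem Step.map_target_eq (h : Step S lab S') : S'.map target = S.map target := by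
  cases h.firing <;> simp [target]

theorem Step.sum_size_eq (h : Step S lab S') : (S'.map size).sum = (S.map size).sum := by
  cases h.firing <;> simp [size]
  ring

theorem Step.countP_isNumber (h : Step S lab S') :
    S'.countP (isNumber ·) + (if lab = .ms3 then 1 else 0) = S.countP (isNumber ·) := by
  cases h.firing <;> simp only [Multiset.countP_cons] <;> simp [isNumber]

theorem Step.countP_size_ne_zero (h : Step S lab S') :
    S'.countP (size · ≠ 0) + (if isMs2 lab then 1 else 0) = S.countP (size · ≠ 0) := by
  cases h.firing <;> simp only [Multiset.countP_cons] <;> simp [size, isMs2]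

/-- The number of input values in the block created by a firing, which is `0` unless the firing
merges two blocks. -/
def mergedSize : Lab → ℕ
  | .ms2 N => 2 * (N + 1)
  | _ => 0

theorem Step.sum_blockPotential (h : Step S lab S') :
    (S'.map blockPotential).sum = (S.map blockPotential).sum + mergedSize lab := by
  cases h.firing with
  | ms1 | ms3 => simp [blockPotential, size, mergedSize]
  | ms2 T N =>
    have hlog : Nat.log 2 (2 * N + 1 + 1) = Nat.log 2 (N + 1) + 1 := by
      rw [show 2 * N + 1 + 1 = (N + 1) * 2 by ring, Nat.log_mul_base one_lt_two N.succ_ne_zero]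
    simp only [blockPotential, size, mergedSize, Multiset.map_cons, Multiset.sum_cons, hlog]
    ring

theorem Step.subsingleton_arrows_sdiff (h : Step S lab S') :
    (arrows S' \ arrows S).Subsingleton := by
  cases h.firing with
  | ms1 => simpa using subsingleton_insert_sdiff (Set.subset_insert _ _) _
  | ms2 => simpa using subsingleton_insert_sdiff subset_rfl _
  | ms3 => simp

theorem Step.subsingleton_merges_sdiff (h : Step S lab S') :
    (merges S' \ merges S).Subsingleton := by
  cases h.firing with
  | ms1 => simp
  | ms2 =>
    simpa using subsingleton_insert_sdiff ((Set.subset_insert _ _).trans (Set.subset_insert _ _)) _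
  | ms3 => simpa using subsingleton_insert_sdiff subset_rfl _

theorem Step.eq_ms1_or_isMs2_of_arrows_sdiff (h : Step S lab S')
    (hne : (arrows S' \ arrows S).Nonempty) :
    lab = .ms1 ∨ isMs2 lab := by
  cases h.firing <;> simp [isMs2] at hne ⊢

theorem Step.isMs2_or_eq_ms3_of_merges_sdiff (h : Step S lab S')
    (hne : (merges S' \ merges S).Nonempty) :
    isMs2 lab ∨ lab = .ms3 := by
  cases h.firing <;> simp [isMs2] at hne ⊢

theorem Step.eq_ms1_of_ms1App (h : Step S lab S') (h1 : ms1App S) : lab = .ms1 := by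
  cases h <;> simp_all

theorem Step.isMs2_of_ms2App (h : Step S lab S') (h1 : ¬ ms1App S) (h2 : ms2App S) :
    isMs2 lab := by
  cases h with
  | ms1 X A B hAB hA hB => exact absurd ⟨X, A, B, hAB, hA, hB⟩ h1
  | ms2 => rfl
  | ms3 _ _ _ h2' => exact absurd h2 h2'

end Steps

section Invariants

variable {S S' : Multiset MSC} {lab : Lab}

/-- The invariants of the reachable stores that mention the store only. -/
structure WellFormed (S : Multiset MSC) : Prop where
  nodup_target : (S.map target).Nodup
  lt_of_arrow {a b : ℤ} : MSC.arrow a b ∈ S → a < b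
  size_eq_two_pow {c : MSC} : c ∈ S → size c ≠ 0 → ∃ j, size c = 2 ^ j
  subsingleton_conflicts_arrows : (conflicts (arrows S)).Subsingleton
  subsingleton_conflicts_merges : (conflicts (merges S)).Subsingleton

theorem WellFormed.nodup (hS : WellFormed S) : S.Nodup := hS.nodup_target.of_map _

theorem WellFormed.lt_of_arrow_step (hS : WellFormed S) (h : Step S lab S') {a b : ℤ}
    (hab : MSC.arrow a b ∈ S') : a < b := by
  cases h.firing with
  | ms1 T X A B hAB =>
    obtain ⟨rfl, rfl⟩ | hab : (a = A ∧ b = B) ∨ MSC.arrow a b ∈ T := by simpa using hab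
    · exact hAB
    · exact hS.lt_of_arrow (by simp [hab])
  | ms2 T N A B hAB =>
    obtain ⟨rfl, rfl⟩ | hab : (a = A ∧ b = B) ∨ MSC.arrow a b ∈ T := by simpa using hab
    · exact hAB
    · exact hS.lt_of_arrow (by simp [hab])
  | ms3 T X => exact hS.lt_of_arrow (by simpa using hab)

theorem WellFormed.size_eq_two_pow_step (hS : WellFormed S) (h : Step S lab S') {c : MSC}
    (hc : c ∈ S') (hc0 : size c ≠ 0) : ∃ j, size c = 2 ^ j := by
  cases h.firing with
  | ms1 T X A B =>
    rcases Multiset.mem_cons.1 hc with rfl | hc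
    · exact absurd rfl hc0
    · exact hS.size_eq_two_pow (by simp [hc]) hc0
  | ms2 T N A B =>
    rcases Multiset.mem_cons.1 hc with rfl | hc
    · obtain ⟨j, hj⟩ := hS.size_eq_two_pow (Multiset.mem_cons_self _ _) N.succ_ne_zero
      exact ⟨j + 1, by rw [pow_succ, ← hj]; simp only [size]; ring⟩
    rcases Multiset.mem_cons.1 hc with rfl | hc
    · exact absurd rfl hc0
    · exact hS.size_eq_two_pow (by simp [hc]) hc0
  | ms3 T X =>
    rcases Multiset.mem_cons.1 hc with rfl | hc
    · exact ⟨0, rfl⟩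
    · exact hS.size_eq_two_pow (by simp [hc]) hc0

theorem WellFormed.conflicts_arrows_eq_empty {T : Multiset MSC} {X A B : ℤ}
    (hS : WellFormed (.arrow X B ::ₘ T)) (hAB : A < B) (hXA : MSC.arrow X A ∈ T) :
    conflicts (arrows T) = ∅ := by
  have hXB : (X, B) ∉ arrows T := (Multiset.nodup_cons.1 hS.nodup).1
  have hconf := hS.subsingleton_conflicts_arrows
  rw [arrows_cons_arrow] at hconf
  exact conflicts_eq_empty_of_insert hconf hXB hXA hAB

theorem WellFormed.conflicts_merges_eq_empty {T : Multiset MSC} {N : ℕ} {A B : ℤ}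
    (hS : WellFormed (.merge N A ::ₘ .merge N B ::ₘ T)) (hAB : A < B) :
    conflicts (merges T) = ∅ := by
  have hNB : (N, B) ∉ merges T := (Multiset.nodup_cons.1 (Multiset.nodup_cons.1 hS.nodup).2).1
  have hNB' : (N, B) ∉ insert (N, A) (merges T) := by simpa [hAB.ne'] using hNB
  have hconf := hS.subsingleton_conflicts_merges
  rw [merges_cons_merge, merges_cons_merge, Set.insert_comm] at hconf
  exact conflicts_eq_empty_of_subset (Set.subset_insert _ _)
    (conflicts_eq_empty_of_insert hconf hNB' (Set.mem_insert _ _) hAB)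

theorem WellFormed.subsingleton_conflicts_arrows_step (hS : WellFormed S) (h : Step S lab S') :
    (conflicts (arrows S')).Subsingleton := by
  cases h.firing with
  | ms1 T X A B hAB hXA =>
    simpa using subsingleton_conflicts_insert (hS.conflicts_arrows_eq_empty hAB hXA) (A, B)
  | ms2 T N A B hAB hT => simpa using subsingleton_conflicts_insert hT (A, B)
  | ms3 T X hT => simp [hT]

theorem WellFormed.subsingleton_conflicts_merges_step (hS : WellFormed S) (h : Step S lab S') :
    (conflicts (merges S')).Subsingleton := by
  cases h.firing with
  | ms1 => simpa using hS.subsingleton_conflicts_merges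
  | ms2 T N A B hAB hT =>
    simpa using subsingleton_conflicts_insert (hS.conflicts_merges_eq_empty hAB) (2 * N + 1, A)
  | ms3 T X _ hT => simpa using subsingleton_conflicts_insert hT (0, X)

theorem WellFormed.step (hS : WellFormed S) (h : Step S lab S') : WellFormed S' where
  nodup_target := h.map_target_eq ▸ hS.nodup_target
  lt_of_arrow := hS.lt_of_arrow_step h
  size_eq_two_pow := hS.size_eq_two_pow_step h
  subsingleton_conflicts_arrows := hS.subsingleton_conflicts_arrows_step h
  subsingleton_conflicts_merges := hS.subsingleton_conflicts_merges_step h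

theorem target_mem_values {c : MSC} (hc : c ∈ S) : target c ∈ values S :=
  Multiset.mem_toFinset.2 (Multiset.mem_map_of_mem _ hc)

/-- `ρ` sends every value to the least value of its block, and `r` bounds the number of `ms1`
firings that the current merge still needs: these move the source of the only conflict upwards
through its block. -/
structure Blocks (ρ : ℤ → ℤ) (r : ℕ) (S : Multiset MSC) : Prop where
  map_eq_of_arrow {a b : ℤ} : MSC.arrow a b ∈ S → ρ a = ρ b
  map_target {c : MSC} : c ∈ S → size c ≠ 0 → ρ (target c) = target c
  card_le {c : MSC} : c ∈ S → size c ≠ 0 → #{v ∈ values S | ρ v = target c} ≤ size c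
  card_gt_le {q : ℤ × ℤ × ℤ} :
    q ∈ conflicts (arrows S) → #{v ∈ values S | ρ v = ρ q.1 ∧ q.1 < v} ≤ r

variable {ρ : ℤ → ℤ} {r : ℕ} {T : Multiset MSC}

theorem Blocks.step_ms1 {X A B : ℤ} (hρ : Blocks ρ r (.arrow X B ::ₘ T))
    (hS : WellFormed (.arrow X B ::ₘ T)) (hAB : A < B) (hXA : MSC.arrow X A ∈ T) :
    ∃ r', Blocks ρ r' (.arrow A B ::ₘ T) ∧ r' + 1 = r := by
  have hv : values (.arrow A B ::ₘ T) = values (.arrow X B ::ₘ T) := by simp [values, target]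
  have hXA' : MSC.arrow X A ∈ MSC.arrow X B ::ₘ T := Multiset.mem_cons_of_mem hXA
  have hρA : ρ X = ρ A := hρ.map_eq_of_arrow hXA'
  have hρB : ρ X = ρ B := hρ.map_eq_of_arrow (Multiset.mem_cons_self _ _)
  have mem_of_size {c : MSC} (hc : c ∈ MSC.arrow A B ::ₘ T) (hc0 : size c ≠ 0) :
      c ∈ MSC.arrow X B ::ₘ T :=
    Multiset.mem_cons_of_mem ((Multiset.mem_cons.1 hc).resolve_left (by rintro rfl; exact hc0 rfl))
  have hlt : #{v ∈ values (.arrow X B ::ₘ T) | ρ v = ρ A ∧ A < v} < r := by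
    have hq : (X, A, B) ∈ conflicts (arrows (.arrow X B ::ₘ T)) :=
      ⟨hAB, hXA', Multiset.mem_cons_self _ _⟩
    have hltXA := hS.lt_of_arrow hXA'
    refine (card_lt_card (ssubset_iff_of_subset ?_ |>.2 ⟨A, ?_, ?_⟩)).trans_le (hρ.card_gt_le hq)
    · intro v
      simp only [mem_filter, hρA]
      exact fun ⟨hv, hρv, hAv⟩ ↦ ⟨hv, hρv, hltXA.trans hAv⟩
    · have hA : A ∈ values (.arrow X B ::ₘ T) := target_mem_values hXA'
      simpa [hρA, hltXA] using hA
    · simp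
  refine ⟨r - 1, ⟨fun hab ↦ ?_, fun hc hc0 ↦ ?_, fun hc hc0 ↦ ?_, fun hq ↦ ?_⟩, by omega⟩
  · obtain h | hab := Multiset.mem_cons.1 hab
    · cases h
      rw [← hρA, hρB]
    · exact hρ.map_eq_of_arrow (Multiset.mem_cons_of_mem hab)
  · exact hρ.map_target (mem_of_size hc hc0) hc0
  · exact hv ▸ hρ.card_le (mem_of_size hc hc0) hc0
  · rw [arrows_cons_arrow] at hq
    rw [hv, fst_eq_of_mem_conflicts_insert (hS.conflicts_arrows_eq_empty hAB hXA) hq]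
    omega

theorem WellFormed.target_ne {c c' : MSC} (hS : WellFormed (c ::ₘ T)) (hc' : c' ∈ T) :
    target c' ≠ target c := by
  have h := hS.nodup_target
  rw [Multiset.map_cons, Multiset.nodup_cons] at h
  exact fun e ↦ h.1 (e ▸ Multiset.mem_map_of_mem _ hc')

theorem WellFormed.eq_merge_or_target_ne {N : ℕ} {A B : ℤ} {c : MSC}
    (hS : WellFormed (.merge N A ::ₘ .merge N B ::ₘ T))
    (hc : c ∈ MSC.merge (2 * N + 1) A ::ₘ .arrow A B ::ₘ T) (hc0 : size c ≠ 0) :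
    c = .merge (2 * N + 1) A ∨ c ∈ T ∧ target c ≠ A ∧ target c ≠ B := by
  obtain rfl | rfl | hc : c = .merge (2 * N + 1) A ∨ c = .arrow A B ∨ c ∈ T := by simpa using hc
  · exact .inl rfl
  · exact absurd rfl hc0
  · refine .inr ⟨hc, hS.target_ne (Multiset.mem_cons_of_mem hc), ?_⟩
    rw [Multiset.cons_swap] at hS
    exact hS.target_ne (Multiset.mem_cons_of_mem hc)

theorem Blocks.step_ms2 {N : ℕ} {A B : ℤ} (hρ : Blocks ρ r (.merge N A ::ₘ .merge N B ::ₘ T))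
    (hS : WellFormed (.merge N A ::ₘ .merge N B ::ₘ T)) (hT : conflicts (arrows T) = ∅) :
    ∃ ρ', Blocks ρ' (2 * (N + 1)) (.merge (2 * N + 1) A ::ₘ .arrow A B ::ₘ T) := by
  set S := MSC.merge N A ::ₘ .merge N B ::ₘ T
  set S' := MSC.merge (2 * N + 1) A ::ₘ .arrow A B ::ₘ T
  have hv : values S' = values S := by simp [S, S', values, target]
  have hTS {c : MSC} (hc : c ∈ T) : c ∈ S := by simp [S, hc]
  have hA : MSC.merge N A ∈ S := by simp [S]
  have hB : MSC.merge N B ∈ S := by simp [S]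
  have hρA : ρ A = A := hρ.map_target hA N.succ_ne_zero
  have hρB : ρ B = B := hρ.map_target hB N.succ_ne_zero
  let ρ' v := if ρ v = B then A else ρ v
  have hρ'A : ρ' A = A := by simp [ρ', hρA]
  have hcard : #{v ∈ values S | ρ' v = A} ≤ 2 * (N + 1) := by
    rw [two_mul]
    exact (card_filter_ite_eq_le _ ρ).trans
      (add_le_add (hρ.card_le hA N.succ_ne_zero) (hρ.card_le hB N.succ_ne_zero))
  refine ⟨ρ', ⟨fun {a b} hab ↦ ?_, fun {c} hc hc0 ↦ ?_, fun {c} hc hc0 ↦ ?_, fun {q} hq ↦ ?_⟩⟩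
  · obtain ⟨rfl, rfl⟩ | hab : (a = A ∧ b = B) ∨ MSC.arrow a b ∈ T := by simpa [S'] using hab
    · simp [ρ', hρA, hρB]
    · have hρab : ρ a = ρ b := hρ.map_eq_of_arrow (hTS hab)
      simp only [ρ', hρab]
  · obtain rfl | ⟨hcT, -, hcB⟩ := hS.eq_merge_or_target_ne hc hc0
    · exact hρ'A
    · simp [ρ', hρ.map_target (hTS hcT) hc0, hcB]
  · rw [hv]
    obtain rfl | ⟨hcT, hcA, -⟩ := hS.eq_merge_or_target_ne hc hc0
    · exact hcard
    · refine (card_le_card fun v ↦ ?_).trans (hρ.card_le (hTS hcT) hc0)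
      simp only [mem_filter, ρ']
      grind
  · have hqA : q.1 = A := fst_eq_of_mem_conflicts_insert hT (a := B) (by simpa [S'] using hq)
    rw [hv, hqA, hρ'A]
    exact (card_le_card (monotone_filter_right _ fun _ _ hv ↦ hv.1)).trans hcard

theorem Blocks.step_ms3 {X : ℤ} (hρ : Blocks ρ r (.number X ::ₘ T)) :
    Blocks ρ r (.merge 0 X ::ₘ T) := by
  have hv : values (.merge 0 X ::ₘ T) = values (.number X ::ₘ T) := by simp [values, target]
  refine ⟨fun hab ↦ hρ.map_eq_of_arrow (by simpa using hab), fun hc hc0 ↦ ?_, fun hc hc0 ↦ ?_,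
    fun hq ↦ hv ▸ hρ.card_gt_le (by simpa using hq)⟩
  · obtain rfl | hc := Multiset.mem_cons.1 hc
    · exact hρ.map_target (c := .number X) (Multiset.mem_cons_self _ _) one_ne_zero
    · exact hρ.map_target (Multiset.mem_cons_of_mem hc) hc0
  · rw [hv]
    obtain rfl | hc := Multiset.mem_cons.1 hc
    · exact hρ.card_le (c := .number X) (Multiset.mem_cons_self _ _) one_ne_zero
    · exact hρ.card_le (Multiset.mem_cons_of_mem hc) hc0

theorem Blocks.step (hρ : Blocks ρ r S) (hS : WellFormed S) (h : Step S lab S') :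
    ∃ ρ' r', Blocks ρ' r' S' ∧ r' + (if lab = .ms1 then 1 else 0) ≤ r + mergedSize lab := by
  cases h.firing with
  | ms1 T X A B hAB hXA =>
    obtain ⟨r', hr', hle⟩ := hρ.step_ms1 hS hAB hXA
    exact ⟨ρ, r', hr', by simp [hle]⟩
  | ms2 T N A B hAB hT =>
    obtain ⟨ρ', hρ'⟩ := hρ.step_ms2 hS hT
    exact ⟨ρ', _, hρ', by simp [mergedSize]⟩
  | ms3 T X => exact ⟨ρ, r, hρ.step_ms3, by simp⟩

end Invariants

section Initial

variable {l : List ℤ}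

theorem mem_initState {c : MSC} : c ∈ InitState l ↔ ∃ x ∈ l, .number x = c := by
  simp [InitState]

theorem map_target_initState : (InitState l).map target = l := by
  simp [InitState, Function.comp_def, target]

theorem arrows_initState : arrows (InitState l) = ∅ := by
  ext q
  simp [arrows, mem_initState]

theorem merges_initState : merges (InitState l) = ∅ := by
  ext q
  simp [merges, mem_initState]

theorem sum_size_initState : ((InitState l).map size).sum = l.length := by
  simp [InitState, Function.comp_def, size]

theorem sum_blockPotential_initState : ((InitState l).map blockPotential).sum = 0 := by
  simp [InitState, Function.comp_def, blockPotential, size]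

theorem countP_initState {p : MSC → Prop} [DecidablePred p] (hp : ∀ x, p (.number x)) :
    (InitState l).countP p = l.length := by
  rw [Multiset.countP_eq_card.2]
  · simp [InitState]
  · intro c hc
    obtain ⟨x, -, rfl⟩ := mem_initState.1 hc
    exact hp x

theorem wellFormed_initState (hl : l.Nodup) : WellFormed (InitState l) where
  nodup_target := by simpa [map_target_initState] using hl
  lt_of_arrow h := by simp [mem_initState] at h
  size_eq_two_pow h _ := by
    obtain ⟨x, -, rfl⟩ := mem_initState.1 h
    exact ⟨0, rfl⟩
  subsingleton_conflicts_arrows := by simp [arrows_initState, conflicts]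
  subsingleton_conflicts_merges := by simp [merges_initState, conflicts]

theorem blocks_initState : Blocks id 0 (InitState l) where
  map_eq_of_arrow h := by simp [mem_initState] at h
  map_target _ _ := rfl
  card_le {c} h _ := by
    obtain ⟨x, -, rfl⟩ := mem_initState.1 h
    exact card_le_one.2 fun a ha b hb ↦ (mem_filter.1 ha).2.trans (mem_filter.1 hb).2.symm
  card_gt_le h := by simp [arrows_initState, conflicts] at h

end Initial

section Final

variable {S : Multiset MSC}

/-- The stores in which no rule applies, where a derivation stops. -/
def IsFinal (S : Multiset MSC) : Prop := ∀ lab S', ¬ Step S lab S'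

theorem IsFinal.not_ms1App (hS : IsFinal S) : ¬ ms1App S :=
  fun ⟨X, A, B, hAB, hA, hB⟩ ↦ hS _ _ (.ms1 S X A B hAB hA hB)

theorem IsFinal.not_ms2App (hS : IsFinal S) : ¬ ms2App S :=
  fun ⟨N, A, B, hAB, hA, hB⟩ ↦ hS _ _ (.ms2 S N A B hAB hA hB hS.not_ms1App)

theorem IsFinal.number_notMem (hS : IsFinal S) (x : ℤ) : .number x ∉ S :=
  fun hx ↦ hS _ _ (.ms3 S x hx hS.not_ms1App hS.not_ms2App)

theorem IsFinal.countP_isNumber (hS : IsFinal S) : S.countP (isNumber ·) = 0 := by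
  rw [Multiset.countP_eq_zero]
  rintro (x | _ | _) hc
  · exact absurd hc (hS.number_notMem x)
  all_goals simp [isNumber]

theorem IsFinal.injOn_size (hS : IsFinal S) : Set.InjOn size {c | c ∈ S ∧ size c ≠ 0} := by
  have hmerges := conflicts_eq_empty_iff.1 (not_ms2App_iff_conflicts_eq_empty.1 hS.not_ms2App)
  rintro (x | ⟨N, a⟩ | _) ⟨hc, hc0⟩ (y | ⟨M, b⟩ | _) ⟨hd, hd0⟩ hcd
  case merge.merge =>
    obtain rfl : N = M := Nat.succ_injective hcd
    exact congrArg (MSC.merge N) (hmerges N a b hc hd)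
  all_goals first
    | exact absurd rfl hc0
    | exact absurd rfl hd0
    | exact absurd hc (hS.number_notMem _)
    | exact absurd hd (hS.number_notMem _)

theorem WellFormed.countP_size_ne_zero (hS : WellFormed S) (hfin : IsFinal S) :
    S.countP (size · ≠ 0) = (S.map size).sum.bitIndices.length := by
  let s : Finset MSC := ⟨S, hS.nodup⟩
  calc S.countP (size · ≠ 0)
      = #{c ∈ s | size c ≠ 0} := Multiset.countP_eq_card_filter _ _
    _ = (∑ c ∈ s with size c ≠ 0, size c).bitIndices.length :=
        card_eq_length_bitIndices
          (fun c hc ↦ hS.size_eq_two_pow (mem_filter.1 hc).1 (mem_filter.1 hc).2)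
          (hfin.injOn_size.mono fun c hc ↦ mem_filter.1 hc)
    _ = (S.map size).sum.bitIndices.length := by rw [sum_filter_ne_zero]; rfl

end Final

section Derivations

/-- A derivation of length `L` from the initial store of `l`, with stores `f 0, …, f L` and
labels `g 0, …, g (L - 1)`; the values of `f` and `g` further on are arbitrary. -/
structure Derivation (l : List ℤ) (L : ℕ) (f : ℕ → Multiset MSC) (g : ℕ → Lab) : Prop where
  start : f 0 = InitState l
  step : ∀ i < L, Step (f i) (g i) (f (i + 1))

variable {l : List ℤ} {L : ℕ} {f : ℕ → Multiset MSC} {g : ℕ → Lab}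

theorem Derivation.of_le {M : ℕ} (h : Derivation l L f g) (hML : M ≤ L) : Derivation l M f g :=
  ⟨h.start, fun i hi ↦ h.step i (hi.trans_le hML)⟩

theorem Derivation.wellFormed (h : Derivation l L f g) (hl : l.Nodup) : WellFormed (f L) := by
  induction L with
  | zero => exact h.start ▸ wellFormed_initState hl
  | succ L ih => exact (ih (h.of_le L.le_succ)).step (h.step L L.lt_succ_self)

theorem Derivation.map_target (h : Derivation l L f g) : (f L).map target = l := by
  induction L with
  | zero => rw [h.start, map_target_initState]
  | succ L ih => rw [(h.step L L.lt_succ_self).map_target_eq, ih (h.of_le L.le_succ)]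

theorem Derivation.sum_size (h : Derivation l L f g) : ((f L).map size).sum = l.length := by
  induction L with
  | zero => rw [h.start, sum_size_initState]
  | succ L ih => rw [(h.step L L.lt_succ_self).sum_size_eq, ih (h.of_le L.le_succ)]

theorem Derivation.countP_isNumber_add_card (h : Derivation l L f g) :
    (f L).countP (isNumber ·) + #{i ∈ range L | g i = .ms3} = l.length := by
  have hstart : (f 0).countP (isNumber ·) = l.length :=
    h.start ▸ countP_initState fun _ ↦ rfl
  rw [← hstart, card_filter]
  exact add_sum_range_eq_of_succ (F := fun i ↦ (f i).countP (isNumber ·))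
    fun i hi ↦ (h.step i hi).countP_isNumber

theorem Derivation.countP_size_ne_zero_add_card (h : Derivation l L f g) :
    (f L).countP (size · ≠ 0) + #{i ∈ range L | isMs2 (g i)} = l.length := by
  have hstart : (f 0).countP (size · ≠ 0) = l.length :=
    h.start ▸ countP_initState fun _ ↦ one_ne_zero
  rw [← hstart, card_filter]
  exact add_sum_range_eq_of_succ (F := fun i ↦ (f i).countP (size · ≠ 0))
    fun i hi ↦ (h.step i hi).countP_size_ne_zero

theorem Derivation.sum_mergedSize (h : Derivation l L f g) :
    ∑ i ∈ range L, mergedSize (g i) = ((f L).map blockPotential).sum := by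
  induction L with
  | zero => rw [h.start, sum_blockPotential_initState, sum_range_zero]
  | succ L ih =>
    rw [sum_range_succ, ih (h.of_le L.le_succ), (h.step L L.lt_succ_self).sum_blockPotential]

theorem sum_blockPotential_le (S : Multiset MSC) :
    (S.map blockPotential).sum ≤ (S.map size).sum * Nat.log 2 (S.map size).sum := by
  rw [← Multiset.sum_map_mul_right]
  refine Multiset.sum_map_le_sum_map _ _ fun c hc ↦ Nat.mul_le_mul_left _ (Nat.log_mono_right ?_)
  exact Multiset.single_le_sum (by simp) _ (Multiset.mem_map_of_mem _ hc)

theorem Derivation.sum_mergedSize_le (h : Derivation l L f g) :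
    ∑ i ∈ range L, mergedSize (g i) ≤ l.length * Nat.log 2 l.length := by
  rw [h.sum_mergedSize, ← h.sum_size]
  exact sum_blockPotential_le _

theorem ms2Val_le_mergedSize (lab : Lab) : ms2Val lab ≤ mergedSize lab := by
  cases lab <;> simp only [ms2Val, mergedSize] <;> omega

theorem Derivation.sum_ms2Val_le (h : Derivation l L f g) :
    ∑ i ∈ range L, ms2Val (g i) ≤ l.length * Nat.log 2 l.length :=
  (sum_le_sum fun i _ ↦ ms2Val_le_mergedSize (g i)).trans h.sum_mergedSize_le

theorem Derivation.exists_blocks (h : Derivation l L f g) (hl : l.Nodup) :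
    ∃ ρ r, Blocks ρ r (f L) ∧
      r + #{i ∈ range L | g i = .ms1} ≤ ∑ i ∈ range L, mergedSize (g i) := by
  simp only [card_filter]
  induction L with
  | zero => exact ⟨id, 0, h.start ▸ blocks_initState, by simp⟩
  | succ L ih =>
    have hL := h.of_le L.le_succ
    obtain ⟨ρ, r, hρ, hle⟩ := ih hL
    obtain ⟨ρ', r', hρ', hle'⟩ := hρ.step (hL.wellFormed hl) (h.step L L.lt_succ_self)
    exact ⟨ρ', r', hρ', by simp only [sum_range_succ]; omega⟩

theorem Derivation.card_ms1_le (h : Derivation l L f g) (hl : l.Nodup) :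
    #{i ∈ range L | g i = .ms1} ≤ l.length * Nat.log 2 l.length := by
  obtain ⟨ρ, r, -, hle⟩ := h.exists_blocks hl
  exact (Nat.le_of_add_left_le hle).trans h.sum_mergedSize_le

theorem Derivation.card_ms3 (h : Derivation l L f g) (hfin : IsFinal (f L)) :
    #{i ∈ range L | g i = .ms3} = l.length := by
  simpa [hfin.countP_isNumber] using h.countP_isNumber_add_card

theorem Derivation.card_ms2_add_length_bitIndices (h : Derivation l L f g) (hl : l.Nodup)
    (hfin : IsFinal (f L)) :
    #{i ∈ range L | isMs2 (g i)} + l.length.bitIndices.length = l.length := by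
  have hcard := h.countP_size_ne_zero_add_card
  rwa [(h.wellFormed hl).countP_size_ne_zero hfin, h.sum_size, add_comm] at hcard

end Derivations

section PrefixFirings

variable {l : List ℤ} {L : ℕ} {f : ℕ → Multiset MSC} {g : ℕ → Lab}

theorem Derivation.ncard_arrows_le (h : Derivation l L f g) :
    {q : ℤ × ℤ | ∃ i < L, MSC.arrow q.1 q.2 ∈ f i}.ncard ≤
      #{i ∈ range L | g i = .ms1} + #{i ∈ range L | isMs2 (g i)} := by
  calc {q : ℤ × ℤ | ∃ i < L, MSC.arrow q.1 q.2 ∈ f i}.ncard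
      ≤ #{i ∈ range L | g i = .ms1 ∨ isMs2 (g i)} :=
        ncard_le_card_filter_of_sdiff (A := fun i ↦ arrows (f i)) (fun _ hq ↦ hq)
          (h.start ▸ arrows_initState) (fun i hi ↦ (h.step i hi).subsingleton_arrows_sdiff)
          fun i hi ↦ (h.step i hi).eq_ms1_or_isMs2_of_arrows_sdiff
    _ ≤ _ := by
        rw [filter_or]
        exact card_union_le _ _

theorem Derivation.ncard_conflicts_arrows_le (h : Derivation l L f g) (hl : l.Nodup) :
    {q : ℤ × ℤ × ℤ | q.2.1 < q.2.2 ∧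
      ∃ i < L, MSC.arrow q.1 q.2.1 ∈ f i ∧ MSC.arrow q.1 q.2.2 ∈ f i}.ncard ≤
      #{i ∈ range L | g i = .ms1} :=
  ncard_le_card_filter_of_cover (T := fun i ↦ conflicts (arrows (f i)))
    (fun _ ⟨hlt, i, hi, hq⟩ ↦ ⟨i, hi, hlt, hq⟩)
    (fun _ hi ↦ ((h.of_le hi.le).wellFormed hl).subsingleton_conflicts_arrows)
    fun i hi hne ↦ (h.step i hi).eq_ms1_of_ms1App (ms1App_iff_conflicts_nonempty.2 hne)

theorem Derivation.ncard_merges_le (h : Derivation l L f g) :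
    {q : ℕ × ℤ | ∃ i < L, ¬ ms1App (f i) ∧ MSC.merge q.1 q.2 ∈ f i}.ncard ≤
      #{i ∈ range L | isMs2 (g i)} + #{i ∈ range L | g i = .ms3} := by
  calc {q : ℕ × ℤ | ∃ i < L, ¬ ms1App (f i) ∧ MSC.merge q.1 q.2 ∈ f i}.ncard
      ≤ #{i ∈ range L | isMs2 (g i) ∨ g i = .ms3} :=
        ncard_le_card_filter_of_sdiff (A := fun i ↦ merges (f i))
          (fun _ ⟨i, hi, _, hq⟩ ↦ ⟨i, hi, hq⟩) (h.start ▸ merges_initState)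
          (fun i hi ↦ (h.step i hi).subsingleton_merges_sdiff)
          fun i hi ↦ (h.step i hi).isMs2_or_eq_ms3_of_merges_sdiff
    _ ≤ _ := by
        rw [filter_or]
        exact card_union_le _ _

theorem Derivation.ncard_conflicts_merges_le (h : Derivation l L f g) (hl : l.Nodup) :
    {q : ℕ × ℤ × ℤ | q.2.1 < q.2.2 ∧ ∃ i < L, ¬ ms1App (f i) ∧
      MSC.merge q.1 q.2.1 ∈ f i ∧ MSC.merge q.1 q.2.2 ∈ f i}.ncard ≤
      #{i ∈ range L | isMs2 (g i)} :=
  ncard_le_card_filter_of_cover (T := fun i ↦ {q ∈ conflicts (merges (f i)) | ¬ ms1App (f i)})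
    (fun _ ⟨hlt, i, hi, h1, hq⟩ ↦ ⟨i, hi, ⟨hlt, hq⟩, h1⟩)
    (fun _ hi ↦ ((h.of_le hi.le).wellFormed hl).subsingleton_conflicts_merges.anti
      (Set.sep_subset _ _))
    fun i hi ⟨q, hq, h1⟩ ↦
      (h.step i hi).isMs2_of_ms2App h1 (ms2App_iff_conflicts_nonempty.2 ⟨q, hq⟩)

theorem Derivation.ncard_numbers_le (h : Derivation l L f g) :
    {X : ℤ | ∃ i < L, ¬ ms1App (f i) ∧ ¬ ms2App (f i) ∧ MSC.number X ∈ f i}.ncard ≤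
      l.length := by
  have hsub : {X : ℤ | ∃ i < L, ¬ ms1App (f i) ∧ ¬ ms2App (f i) ∧ MSC.number X ∈ f i} ⊆
      l.toFinset := by
    rintro X ⟨i, hi, -, -, hX⟩
    have hXl : X ∈ (f i).map target := Multiset.mem_map_of_mem target hX
    rw [(h.of_le hi.le).map_target] at hXl
    simpa using hXl
  exact (Set.ncard_le_ncard hsub (finite_toSet _)).trans
    ((Set.ncard_coe_finset _).trans_le l.toFinset_card_le)

end PrefixFirings

end MergeSort

open MergeSort in
theorem merge_sort_firing_and_prefix_counts_general :
    ∃ C : ℕ, ∀ (l : List ℤ) (L : ℕ) (f : ℕ → Multiset MSC) (g : ℕ → Lab),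
      l.Nodup → Derivation l L f g → IsFinal (f L) →
      #{i ∈ range L | g i = .ms3} = l.length ∧
      #{i ∈ range L | isMs2 (g i)} + l.length.bitIndices.length = l.length ∧
      ∑ i ∈ range L, ms2Val (g i) ≤ C * (l.length * Nat.log 2 l.length + l.length) ∧
      {q : ℤ × ℤ | ∃ i < L, MSC.arrow q.1 q.2 ∈ f i}.ncard +
        {q : ℤ × ℤ × ℤ | q.2.1 < q.2.2 ∧
          ∃ i < L, MSC.arrow q.1 q.2.1 ∈ f i ∧ MSC.arrow q.1 q.2.2 ∈ f i}.ncard ≤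
        C * (l.length * Nat.log 2 l.length + l.length) ∧
      {q : ℕ × ℤ | ∃ i < L, ¬ ms1App (f i) ∧ MSC.merge q.1 q.2 ∈ f i}.ncard +
        {q : ℕ × ℤ × ℤ | q.2.1 < q.2.2 ∧ ∃ i < L, ¬ ms1App (f i) ∧
          MSC.merge q.1 q.2.1 ∈ f i ∧ MSC.merge q.1 q.2.2 ∈ f i}.ncard ≤ C * l.length ∧
      {X : ℤ | ∃ i < L, ¬ ms1App (f i) ∧ ¬ ms2App (f i) ∧ MSC.number X ∈ f i}.ncard ≤
        C * l.length := by
  refine ⟨3, fun l L f g hl h hfin ↦ ?_⟩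
  have hms1 := h.card_ms1_le hl
  have hms2 := h.card_ms2_add_length_bitIndices hl hfin
  have hms3 := h.card_ms3 hfin
  have hval := h.sum_ms2Val_le
  have harrow := h.ncard_arrows_le
  have harrows := h.ncard_conflicts_arrows_le hl
  have hmerge := h.ncard_merges_le
  have hmerges := h.ncard_conflicts_merges_le hl
  have hnumber := h.ncard_numbers_le
  refine ⟨hms3, hms2, ?_, ?_, ?_, ?_⟩ <;> omega

open MergeSort in
/-- In the merge sort CHR^rp program executed under ω_p from an initial goal of `n`
distinct `number/1` constraints (`n` a power of 2), in any complete derivation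
(`f 0 → f 1 → ⋯ → f L` with `f L` final): rule `ms3` fires exactly `n` times, rule
`ms2` fires exactly `n − 1` times, the sum over all fired `ms2` instances producing
`merge(2·N+1,_)` of the values `N` is `O(n log n)`, and the total numbers of strong
prefix firings (partial matches of head prefixes, with guard prefix satisfied, holding
in some state of the derivation whose priority is lower than or equal to the rule's
priority — identified by the instantiation of the variables of the matched prefix) are
`O(n log n)` for rule `ms1`, `O(n)` for rule `ms2` and `O(n)` for rule `ms3`. -/
theorem merge_sort_firing_and_prefix_counts :
    ∃ C : ℕ, ∀ (k n : ℕ) (l : List ℤ) (L : ℕ) (f : ℕ → Multiset MSC) (g : ℕ → Lab),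
      n = 2 ^ k → l.length = n → l.Nodup →
      f 0 = InitState l →
      (∀ i < L, Step (f i) (g i) (f (i + 1))) →
      (∀ lab S', ¬ Step (f L) lab S') →
      (((Finset.range L).filter (fun i => g i = Lab.ms3)).card = n ∧
       ((Finset.range L).filter (fun i => isMs2 (g i) = true)).card = n - 1 ∧
       (∑ i ∈ Finset.range L, ms2Val (g i)) ≤ C * (n * Nat.log 2 n + n) ∧
       -- strong prefix firings of ms1 (priority 1: every non-final state qualifies)
       Set.ncard {q : ℤ × ℤ | ∃ i < L, MSC.arrow q.1 q.2 ∈ f i} +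
         Set.ncard {q : ℤ × ℤ × ℤ | q.2.1 < q.2.2 ∧
           ∃ i < L, MSC.arrow q.1 q.2.1 ∈ f i ∧ MSC.arrow q.1 q.2.2 ∈ f i} ≤
         C * (n * Nat.log 2 n + n) ∧
       -- strong prefix firings of ms2 (priority 2: states with no ms1 instance)
       Set.ncard {q : ℕ × ℤ | ∃ i < L, ¬ ms1App (f i) ∧ MSC.merge q.1 q.2 ∈ f i} +
         Set.ncard {q : ℕ × ℤ × ℤ | q.2.1 < q.2.2 ∧
           ∃ i < L, ¬ ms1App (f i) ∧ MSC.merge q.1 q.2.1 ∈ f i ∧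
             MSC.merge q.1 q.2.2 ∈ f i} ≤ C * n ∧
       -- strong prefix firings of ms3 (priority 3: states with no ms1/ms2 instance)
       Set.ncard {X : ℤ | ∃ i < L, ¬ ms1App (f i) ∧ ¬ ms2App (f i) ∧
         MSC.number X ∈ f i} ≤ C * n) := by
  obtain ⟨C, hC⟩ := merge_sort_firing_and_prefix_counts_general
  refine ⟨C, fun k n l L f g hn hlen hl h0 hstep hfin ↦ ?_⟩
  subst hlen
  obtain ⟨hms3, hms2, hbounds⟩ := hC l L f g hl ⟨h0, hstep⟩ hfin
  exact ⟨hms3, Nat.eq_sub_of_add_eq (by simpa [hn] using hms2), hbounds⟩
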